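/- arXiv:2604.18595 — 7 statements merged into one kernel-verified Lean document; each statement's English description precedes it below -/
import Mathlib

section
/- Let g : (0,1) → ℝ satisfy Q(g(y)) = y for all y ∈ (0,1), where Q is the Gaussian Q-function. Then g is strictly decreasing on (0,1) and strictly convex on (0, 1/2). -/
/-- The Gaussian Q-function: the upper-tail probability of the standard
normal distribution, `Q(x) = ∫_x^∞ (1/√(2π)) e^{−t²/2} dt`. -/
noncomputable def gaussQ (x : ℝ) : ℝ :=
  ∫ t in Set.Ioi x, (Real.sqrt (2 * Real.pi))⁻¹ * Real.exp (-t ^ 2 / 2)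

/-!
A right inverse of a decreasing, strictly convex function is strictly decreasing and strictly
convex: applying the function to both sides of the convexity inequality for the inverse turns it
into the one for the function. An upper-tail integral `x ↦ ∫_x^∞ f` is strictly decreasing where
`f > 0`, and strictly convex where `f` is strictly decreasing, since its slopes to the left and to
the right of `y` are separated by `-f y`. The Gaussian density is positive everywhere and strictly
decreasing to the right of its mean `0`; by symmetry `Q 0 = 1/2`, so an inverse of `Q` maps
`(0, 1/2)` into `[0, ∞)`, where `Q` is strictly convex.
-/

open MeasureTheory ProbabilityTheory Set
open scoped NNReal

section RightInverse

theorem strictAntiOn_of_rightInvOn_of_mapsTo {α β : Type*} [PartialOrder α] [LinearOrder β]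
    {f : β → α} {g : α → β} {s : Set α} {t : Set β} (hf : AntitoneOn f t)
    (hgf : RightInvOn g f s) (hg : MapsTo g s t) : StrictAntiOn g s :=
  (Function.antitoneOn_of_rightInvOn_of_mapsTo hf hgf hg).strictAntiOn_of_injOn hgf.injOn

theorem strictConvexOn_of_rightInvOn_of_mapsTo {𝕜 E F : Type*} [Semiring 𝕜] [PartialOrder 𝕜]
    [AddCommMonoid E] [PartialOrder E] [SMul 𝕜 E] [AddCommMonoid F] [LinearOrder F] [SMul 𝕜 F]
    {f : F → E} {g : E → F} {s : Set E} {t : Set F} (hs : Convex 𝕜 s) (hf : AntitoneOn f t)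
    (hfc : StrictConvexOn 𝕜 t f) (hgf : RightInvOn g f s) (hg : MapsTo g s t) :
    StrictConvexOn 𝕜 s g := by
  refine ⟨hs, fun x hx y hy hxy a b ha hb hab ↦ ?_⟩
  have hxy_mem : a • x + b • y ∈ s := hs hx hy ha.le hb.le hab
  have hgxy_mem : a • g x + b • g y ∈ t := hfc.1 (hg hx) (hg hy) ha.le hb.le hab
  have lt_apply_g : f (a • g x + b • g y) < f (g (a • x + b • y)) := calc
    f (a • g x + b • g y) < a • f (g x) + b • f (g y) :=
      hfc.2 (hg hx) (hg hy) (hgf.injOn.ne hx hy hxy) ha hb hab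
    _ = f (g (a • x + b • y)) := by rw [hgf hx, hgf hy, hgf hxy_mem]
  exact lt_of_not_ge fun hle ↦ (hf hgxy_mem (hg hxy_mem) hle).not_gt lt_apply_g

end RightInverse

section TailIntegral

variable {f : ℝ → ℝ} {a b : ℝ}

theorem sub_mul_lt_intervalIntegral_of_strictAntiOn (hf : StrictAntiOn f (Ioc a b))
    (hfi : IntervalIntegrable f volume a b) (hab : a < b) : (b - a) * f b < ∫ t in a..b, f t := by
  have integral_pos : 0 < ∫ t in a..b, (f t - f b) :=
    intervalIntegral.intervalIntegral_pos_of_pos_on (hfi.sub intervalIntegrable_const)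
      (fun t ht ↦ sub_pos.2 (hf (Ioo_subset_Ioc_self ht) (right_mem_Ioc.2 hab) ht.2)) hab
  rwa [intervalIntegral.integral_sub hfi intervalIntegrable_const,
    intervalIntegral.integral_const, smul_eq_mul, sub_pos] at integral_pos

theorem intervalIntegral_lt_sub_mul_of_strictAntiOn (hf : StrictAntiOn f (Ico a b))
    (hfi : IntervalIntegrable f volume a b) (hab : a < b) : ∫ t in a..b, f t < (b - a) * f a := by
  have integral_pos : 0 < ∫ t in a..b, (f a - f t) :=
    intervalIntegral.intervalIntegral_pos_of_pos_on (intervalIntegrable_const.sub hfi)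
      (fun t ht ↦ sub_pos.2 (hf (left_mem_Ico.2 hab) (Ioo_subset_Ico_self ht) ht.1)) hab
  rwa [intervalIntegral.integral_sub intervalIntegrable_const hfi,
    intervalIntegral.integral_const, smul_eq_mul, sub_pos] at integral_pos

theorem intervalIntegrable_of_integrableOn_Ioi {x y : ℝ} (hf : IntegrableOn f (Ioi a))
    (hx : a ≤ x) (hxy : x ≤ y) : IntervalIntegrable f volume x y :=
  (intervalIntegrable_iff_integrableOn_Ioc_of_le hxy).2
    (hf.mono_set (Ioc_subset_Ioi_self.trans (Ioi_subset_Ioi hx)))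

theorem strictAntiOn_setIntegral_Ioi_of_pos (hfi : IntegrableOn f (Ioi a))
    (hpos : ∀ t ∈ Ioi a, 0 < f t) : StrictAntiOn (fun x ↦ ∫ t in Ioi x, f t) (Ici a) := by
  intro x (hx : a ≤ x) y _ hxy
  refine sub_pos.1 ?_
  rw [intervalIntegral.integral_Ioi_sub_Ioi (hfi.mono_set (Ioi_subset_Ioi hx)) hxy.le]
  exact intervalIntegral.intervalIntegral_pos_of_pos_on
    (intervalIntegrable_of_integrableOn_Ioi hfi hx hxy.le)
    (fun t ht ↦ hpos t (hx.trans_lt ht.1)) hxy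

theorem strictConvexOn_setIntegral_Ioi_of_strictAntiOn (hfi : IntegrableOn f (Ioi a))
    (hf : StrictAntiOn f (Ioi a)) : StrictConvexOn ℝ (Ici a) (fun x ↦ ∫ t in Ioi x, f t) := by
  refine strictConvexOn_of_slope_strict_mono_adjacent (convex_Ici a)
    fun {x y z} (hx : a ≤ x) _ hxy hyz ↦ ?_
  have hy : a < y := hx.trans_lt hxy
  have tail_sub {u v : ℝ} (hu : a ≤ u) (huv : u < v) :
      (∫ t in Ioi v, f t) - ∫ t in Ioi u, f t = -∫ t in u..v, f t := by
    rw [← intervalIntegral.integral_Ioi_sub_Ioi (hfi.mono_set (Ioi_subset_Ioi hu)) huv.le, neg_sub]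
  have left_integral : (y - x) * f y < ∫ t in x..y, f t :=
    sub_mul_lt_intervalIntegral_of_strictAntiOn
      (hf.mono fun t ht ↦ hx.trans_lt ht.1)
      (intervalIntegrable_of_integrableOn_Ioi hfi hx hxy.le) hxy
  have right_integral : ∫ t in y..z, f t < (z - y) * f y :=
    intervalIntegral_lt_sub_mul_of_strictAntiOn
      (hf.mono fun t ht ↦ hy.trans_le ht.1)
      (intervalIntegrable_of_integrableOn_Ioi hfi hy.le hyz.le) hyz
  rw [tail_sub hx hxy, tail_sub hy.le hyz]
  calc (-∫ t in x..y, f t) / (y - x)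
      < -f y := by rw [div_lt_iff₀ (sub_pos.2 hxy)]; linarith
    _ < (-∫ t in y..z, f t) / (z - y) := by rw [lt_div_iff₀ (sub_pos.2 hyz)]; linarith

end TailIntegral

section GaussianDensity

variable {μ : ℝ} {v : ℝ≥0}

theorem strictAntiOn_gaussianPDFReal (hv : v ≠ 0) : StrictAntiOn (gaussianPDFReal μ v) (Ici μ) := by
  intro x (hx : μ ≤ x) y _ hxy
  have : (0 : ℝ) < v := NNReal.coe_pos.2 (pos_iff_ne_zero.2 hv)
  have sq_lt : (x - μ) ^ 2 < (y - μ) ^ 2 :=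
    pow_lt_pow_left₀ (sub_lt_sub_right hxy μ) (sub_nonneg.2 hx) two_ne_zero
  unfold gaussianPDFReal
  gcongr

theorem setIntegral_Ioi_mean_gaussianPDFReal (hv : v ≠ 0) :
    ∫ t in Ioi μ, gaussianPDFReal μ v t = 1 / 2 := by
  have even (t : ℝ) : gaussianPDFReal 0 v |t| = gaussianPDFReal 0 v t := by
    simp only [gaussianPDFReal, sub_zero, sq_abs]
  have translate : ∫ t in Ioi 0, gaussianPDFReal 0 v t = ∫ t in Ioi μ, gaussianPDFReal μ v t := by
    simpa [gaussianPDFReal_add] using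
      (measurePreserving_add_right volume μ).setIntegral_preimage_emb
        (measurableEmbedding_addRight μ) (gaussianPDFReal μ v) (Ioi μ)
  have double : 1 = 2 * ∫ t in Ioi 0, gaussianPDFReal 0 v t := calc
    1 = ∫ t, gaussianPDFReal 0 v |t| := by simp only [even, integral_gaussianPDFReal_eq_one 0 hv]
    _ = 2 * ∫ t in Ioi 0, gaussianPDFReal 0 v t := integral_comp_abs
  linarith

end GaussianDensity

theorem gaussQ_eq_setIntegral_gaussianPDFReal :
    gaussQ = fun x ↦ ∫ t in Ioi x, gaussianPDFReal 0 1 t := by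
  simp [funext_iff, gaussQ, gaussianPDFReal]

theorem gaussQ_zero : gaussQ 0 = 1 / 2 := by
  rw [gaussQ_eq_setIntegral_gaussianPDFReal]
  exact setIntegral_Ioi_mean_gaussianPDFReal one_ne_zero

theorem gaussQ_strictAnti : StrictAnti gaussQ := by
  intro x y hxy
  rw [gaussQ_eq_setIntegral_gaussianPDFReal]
  exact strictAntiOn_setIntegral_Ioi_of_pos (integrable_gaussianPDFReal 0 1).integrableOn
    (fun t _ ↦ gaussianPDFReal_pos 0 1 t one_ne_zero) self_mem_Ici hxy.le hxy

theorem gaussQ_strictConvexOn : StrictConvexOn ℝ (Ici 0) gaussQ := by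
  rw [gaussQ_eq_setIntegral_gaussianPDFReal]
  exact strictConvexOn_setIntegral_Ioi_of_strictAntiOn
    (integrable_gaussianPDFReal 0 1).integrableOn
    ((strictAntiOn_gaussianPDFReal one_ne_zero).mono Ioi_subset_Ici_self)

/-- An inverse `g` of the Gaussian Q-function is strictly decreasing on
`(0,1)` and strictly convex on `(0, 1/2)`. -/
theorem inv_gaussQ_strictAntiOn_and_strictConvexOn
    (g : ℝ → ℝ) (hg : ∀ y ∈ Set.Ioo (0 : ℝ) 1, gaussQ (g y) = y) :
    StrictAntiOn g (Set.Ioo (0 : ℝ) 1) ∧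
    StrictConvexOn ℝ (Set.Ioo (0 : ℝ) (1 / 2)) g := by
  have hg_half : RightInvOn g gaussQ (Ioo 0 (1 / 2)) :=
    fun y hy ↦ hg y (Ioo_subset_Ioo_right one_half_lt_one.le hy)
  have g_nonneg : MapsTo g (Ioo 0 (1 / 2)) (Ici 0) := fun y hy ↦ by
    rw [mem_Ici, ← gaussQ_strictAnti.le_iff_ge, hg_half hy, gaussQ_zero]
    exact hy.2.le
  exact ⟨strictAntiOn_of_rightInvOn_of_mapsTo (gaussQ_strictAnti.antitone.antitoneOn univ) hg
      (mapsTo_univ g _),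
    strictConvexOn_of_rightInvOn_of_mapsTo (convex_Ioo 0 (1 / 2))
      (gaussQ_strictAnti.antitone.antitoneOn _) gaussQ_strictConvexOn hg_half g_nonneg⟩
end

section
/- Fix a channel dispersion V > 0 and an error-rate-QoS exponent ϑ > 0, and let g : (0,1) → ℝ be an inverse of the Gaussian Q-function. Then √(V/n) · g(e^{−nϑ}) → √(2Vϑ) as n → ∞ (n ranging over the positive reals, or over the natural numbers). Consequently, for large nϑ the rate–reliability function admits the approximation R* = C − √(V/n) Q^{−1}(e^{−nϑ}) ≈ C − √(2Vϑ). -/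
/-!
The Chernoff bound from above and the density at distance one from below pin the Gaussian tail on
the logarithmic scale: `log Q(x) / x² → -1/2` as `x → ∞`. An inverse `g` of `Q` tends to infinity
at `0⁺`, so substituting `x = g y` gives `g y ∼ √(-2 log y)` as `y → 0⁺`. At `y = e^{-nϑ}` the
right-hand side is `√(2nϑ)`, and the factor `√(V/n)` cancels the growth in `n`.
-/

open Filter MeasureTheory ProbabilityTheory Set
open scoped NNReal Real Topology

section GaussianTail

variable (μ : ℝ) (v : ℝ≥0)

lemma hasSubgaussianMGF_sub_mean_gaussianReal :
    HasSubgaussianMGF (fun x ↦ x - μ) v (gaussianReal μ v) where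
  integrable_exp_mul t := by
    simpa only [mul_sub, Real.exp_sub] using (integrable_exp_mul_gaussianReal t).div_const _
  mgf_le t := by
    rw [mgf_gaussianReal (gaussianReal_map_sub_const μ)]
    simp

variable {μ v}

lemma gaussianReal_real_Ioi_le_exp {x : ℝ} (hx : μ ≤ x) :
    (gaussianReal μ v).real (Ioi x) ≤ Real.exp (-(x - μ) ^ 2 / (2 * v)) :=
  calc (gaussianReal μ v).real (Ioi x)
    _ ≤ (gaussianReal μ v).real {t | x - μ ≤ t - μ} :=
      measureReal_mono fun _ ht ↦ sub_le_sub_right (le_of_lt ht) μ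
    _ ≤ Real.exp (-(x - μ) ^ 2 / (2 * v)) :=
      (hasSubgaussianMGF_sub_mean_gaussianReal μ v).measure_ge_le (sub_nonneg.2 hx)

lemma gaussianReal_real_eq_setIntegral (hv : v ≠ 0) (s : Set ℝ) :
    (gaussianReal μ v).real s = ∫ t in s, gaussianPDFReal μ v t := by
  rw [measureReal_def, gaussianReal_apply_eq_integral μ hv, ENNReal.toReal_ofReal]
  exact integral_nonneg (gaussianPDFReal_nonneg μ v)

lemma antitoneOn_gaussianPDFReal : AntitoneOn (gaussianPDFReal μ v) (Ici μ) := by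
  intro s hs t _ hst
  have : 0 ≤ s - μ := sub_nonneg.2 hs
  unfold gaussianPDFReal
  gcongr

lemma gaussianPDFReal_mul_sub_le_gaussianReal_real_Ioi (hv : v ≠ 0) {a b : ℝ} (ha : μ ≤ a)
    (hab : a ≤ b) : gaussianPDFReal μ v b * (b - a) ≤ (gaussianReal μ v).real (Ioi a) :=
  calc gaussianPDFReal μ v b * (b - a)
    _ = gaussianPDFReal μ v b * volume.real (Ioc a b) := by rw [Real.volume_real_Ioc_of_le hab]
    _ ≤ ∫ t in Ioc a b, gaussianPDFReal μ v t :=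
      setIntegral_ge_of_const_le_real measurableSet_Ioc measure_Ioc_lt_top.ne
        (fun _ ht ↦ antitoneOn_gaussianPDFReal (ha.trans ht.1.le) (ha.trans hab) ht.2)
        (integrable_gaussianPDFReal μ v).integrableOn
    _ = (gaussianReal μ v).real (Ioc a b) := (gaussianReal_real_eq_setIntegral hv _).symm
    _ ≤ (gaussianReal μ v).real (Ioi a) := measureReal_mono Ioc_subset_Ioi_self

lemma log_gaussianPDFReal (hv : v ≠ 0) (x : ℝ) :
    Real.log (gaussianPDFReal μ v x) =
      Real.log (√(2 * π * v))⁻¹ + -(x - μ) ^ 2 / (2 * v) := by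
  have : (√(2 * π * v))⁻¹ ≠ 0 := by positivity
  rw [gaussianPDFReal, Real.log_mul this (Real.exp_ne_zero _), Real.log_exp]

lemma gaussianReal_real_Ioi_pos (hv : v ≠ 0) (x : ℝ) : 0 < (gaussianReal μ v).real (Ioi x) :=
  calc 0 < gaussianPDFReal μ v (max μ x + 1) * (max μ x + 1 - max μ x) :=
      mul_pos (gaussianPDFReal_pos _ _ _ hv) (by simp)
    _ ≤ (gaussianReal μ v).real (Ioi (max μ x)) :=
      gaussianPDFReal_mul_sub_le_gaussianReal_real_Ioi hv (le_max_left _ _) (by simp)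
    _ ≤ (gaussianReal μ v).real (Ioi x) := measureReal_mono (Ioi_subset_Ioi (le_max_right _ _))

lemma tendsto_const_add_neg_sub_sq_div_div_sq (c a d : ℝ) :
    Tendsto (fun x : ℝ ↦ (c + -(x - a) ^ 2 / d) / x ^ 2) atTop (𝓝 (-1 / d)) := by
  have hinv : Tendsto (fun x : ℝ ↦ x⁻¹) atTop (𝓝 0) := tendsto_inv_atTop_zero
  have hlim : Tendsto (fun x : ℝ ↦ c * x⁻¹ ^ 2 + -(1 - a * x⁻¹) ^ 2 / d) atTop
      (𝓝 (c * 0 ^ 2 + -(1 - a * 0) ^ 2 / d)) :=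
    ((hinv.pow 2).const_mul c).add ((((hinv.const_mul a).const_sub 1).pow 2).neg.div_const d)
  have hval : c * 0 ^ 2 + -(1 - a * 0) ^ 2 / d = -1 / d := by ring
  rw [hval] at hlim
  refine hlim.congr' ?_
  filter_upwards [eventually_ne_atTop 0] with x hx
  field_simp

theorem tendsto_log_gaussianReal_real_Ioi_div_sq (hv : v ≠ 0) :
    Tendsto (fun x ↦ Real.log ((gaussianReal μ v).real (Ioi x)) / x ^ 2) atTop
      (𝓝 (-1 / (2 * v))) := by
  refine tendsto_of_tendsto_of_tendsto_of_le_of_le'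
    (tendsto_const_add_neg_sub_sq_div_div_sq (Real.log (√(2 * π * v))⁻¹) (μ - 1) (2 * v))
    (tendsto_const_add_neg_sub_sq_div_div_sq 0 μ (2 * v)) ?_ ?_
  · filter_upwards [eventually_ge_atTop μ] with x hx
    gcongr
    calc Real.log (√(2 * π * v))⁻¹ + -(x - (μ - 1)) ^ 2 / (2 * v)
      _ = Real.log (gaussianPDFReal μ v (x + 1)) := by rw [log_gaussianPDFReal hv]; ring
      _ ≤ Real.log ((gaussianReal μ v).real (Ioi x)) := by
        refine Real.log_le_log (gaussianPDFReal_pos _ _ _ hv) ?_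
        simpa using gaussianPDFReal_mul_sub_le_gaussianReal_real_Ioi hv hx (by simp : x ≤ x + 1)
  · filter_upwards [eventually_ge_atTop μ] with x hx
    gcongr
    rw [zero_add, Real.log_le_iff_le_exp (gaussianReal_real_Ioi_pos hv x)]
    exact gaussianReal_real_Ioi_le_exp hx

end GaussianTail

lemma gaussQ_eq_gaussianReal_real_Ioi (x : ℝ) : gaussQ x = (gaussianReal 0 1).real (Ioi x) := by
  simp [gaussianReal_real_eq_setIntegral, gaussianPDFReal, gaussQ]

lemma gaussQ_pos (x : ℝ) : 0 < gaussQ x := by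
  simpa only [gaussQ_eq_gaussianReal_real_Ioi] using gaussianReal_real_Ioi_pos one_ne_zero x

lemma antitone_gaussQ : Antitone gaussQ := by
  intro x y hxy
  simp only [gaussQ_eq_gaussianReal_real_Ioi]
  exact measureReal_mono (Ioi_subset_Ioi hxy)

lemma tendsto_log_gaussQ_div_sq :
    Tendsto (fun x ↦ Real.log (gaussQ x) / x ^ 2) atTop (𝓝 (-1 / 2)) := by
  simpa [gaussQ_eq_gaussianReal_real_Ioi] using
    tendsto_log_gaussianReal_real_Ioi_div_sq (μ := 0) one_ne_zero

lemma tendsto_atTop_of_antitone_of_eventually_rightInverse {α β : Type*} [LinearOrder α]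
    [LinearOrder β] [TopologicalSpace β] [OrderTopology β] {f : α → β} {g : β → α} {b : β}
    (hf : Antitone f) (hbf : ∀ x, b < f x) (hg : ∀ᶠ y in 𝓝[>] b, f (g y) = y) :
    Tendsto g (𝓝[>] b) atTop := by
  refine tendsto_atTop.2 fun x ↦ ?_
  filter_upwards [hg, Ioo_mem_nhdsGT (hbf x)] with y hy hyx
  exact (hf.reflect_lt (hy.trans_lt hyx.2)).le

theorem tendsto_gaussQ_rightInverse_div_sqrt_neg_two_mul_log {g : ℝ → ℝ}
    (hg : ∀ᶠ y in 𝓝[>] 0, gaussQ (g y) = y) :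
    Tendsto (fun y ↦ g y / √(-2 * Real.log y)) (𝓝[>] 0) (𝓝 1) := by
  have hg_top : Tendsto g (𝓝[>] 0) atTop :=
    tendsto_atTop_of_antitone_of_eventually_rightInverse antitone_gaussQ gaussQ_pos hg
  have hratio : Tendsto (fun y ↦ -2 * (Real.log (gaussQ (g y)) / g y ^ 2)) (𝓝[>] 0) (𝓝 1) := by
    have hval : (-2 : ℝ) * (-1 / 2) = 1 := by norm_num
    exact hval ▸ (tendsto_log_gaussQ_div_sq.comp hg_top).const_mul (-2)
  have hlim : Tendsto (fun y ↦ √(-2 * (Real.log (gaussQ (g y)) / g y ^ 2))⁻¹) (𝓝[>] 0) (𝓝 1) := by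
    simpa only [inv_one, Real.sqrt_one] using (hratio.inv₀ one_ne_zero).sqrt
  refine hlim.congr' ?_
  filter_upwards [hg, hg_top.eventually_ge_atTop 0] with y hy hgy
  rw [hy, ← mul_div_assoc, inv_div, Real.sqrt_div (sq_nonneg _), Real.sqrt_sq hgy]

/-- For dispersion `V > 0` and error-rate-QoS exponent `ϑ > 0`,
`√(V/n) · Q⁻¹(e^{−nϑ}) → √(2Vϑ)` as the blocklength `n → ∞`, so that the
rate–reliability function satisfies `R* ≈ C − √(2Vϑ)` for large `nϑ`. -/
theorem rate_penalty_tendsto_sqrt_two_V_theta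
    (V ϑ : ℝ) (hV : 0 < V) (hϑ : 0 < ϑ)
    (g : ℝ → ℝ) (hg : ∀ y ∈ Set.Ioo (0 : ℝ) 1, gaussQ (g y) = y) :
    Filter.Tendsto
      (fun n : ℝ => Real.sqrt (V / n) * g (Real.exp (-(n * ϑ))))
      Filter.atTop (nhds (Real.sqrt (2 * V * ϑ))) ∧
    Filter.Tendsto
      (fun n : ℕ => Real.sqrt (V / n) * g (Real.exp (-(n * ϑ))))
      Filter.atTop (nhds (Real.sqrt (2 * V * ϑ))) := by
  suffices hreal : Tendsto (fun n : ℝ ↦ √(V / n) * g (Real.exp (-(n * ϑ)))) atTop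
      (𝓝 √(2 * V * ϑ)) from ⟨hreal, hreal.comp tendsto_natCast_atTop_atTop⟩
  have hexp : Tendsto (fun n : ℝ ↦ Real.exp (-(n * ϑ))) atTop (𝓝[>] 0) :=
    Real.tendsto_exp_atBot_nhdsGT.comp
      (tendsto_neg_atTop_atBot.comp (tendsto_id.atTop_mul_const hϑ))
  have hg_near_zero : ∀ᶠ y in 𝓝[>] 0, gaussQ (g y) = y :=
    eventually_of_mem (Ioo_mem_nhdsGT one_pos) hg
  have hratio : Tendsto (fun n : ℝ ↦ g (Real.exp (-(n * ϑ))) / √(-2 * -(n * ϑ))) atTop (𝓝 1) := by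
    simpa only [Function.comp_def, Real.log_exp] using
      (tendsto_gaussQ_rightInverse_div_sqrt_neg_two_mul_log hg_near_zero).comp hexp
  refine (mul_one √(2 * V * ϑ) ▸ hratio.const_mul √(2 * V * ϑ)).congr' ?_
  filter_upwards [eventually_gt_atTop 0] with n hn
  have hsqrt : √(V / n) = √(2 * V * ϑ) / √(-2 * -(n * ϑ)) := by
    rw [← Real.sqrt_div (by positivity)]
    congr 1
    field_simp
  rw [hsqrt]
  ring
end

section
/- The function h(a,b) = e^{−a} + e^{−b} − e^{−(a+b)} is convex on the set S = {(a,b) ∈ ℝ² : a ≥ 0, b ≥ 0, e^{−a} + e^{−b} ≤ 1}, and the set S is itself convex. -/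
/-- The domain `S = {(a,b) : a ≥ 0, b ≥ 0, e^{−a} + e^{−b} ≤ 1}`. -/
def qosDom : Set (ℝ × ℝ) :=
  {p | 0 ≤ p.1 ∧ 0 ≤ p.2 ∧ Real.exp (-p.1) + Real.exp (-p.2) ≤ 1}

/-!
Convexity is tested along lines. On a line with direction `(u, v)`, writing `x = e^{−a}` and
`y = e^{−b}`, the second derivative of `h` is
`x u² + y v² − x y (u + v)² = (x u² + y v²) (1 − (x + y)) + (x u − y v)²`,
which is nonnegative as soon as `x + y ≤ 1`.
-/

open Set AffineMap

theorem convexOn_of_convexOn_comp_lineMap {𝕜 E β : Type*} [Ring 𝕜] [PartialOrder 𝕜]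
    [AddCommGroup E] [Module 𝕜 E] [AddCommMonoid β] [PartialOrder β] [SMul 𝕜 β]
    {s : Set E} {f : E → β}
    (h : ∀ x ∈ s, ∀ y ∈ s, ConvexOn 𝕜 (lineMap x y ⁻¹' s) (f ∘ (lineMap x y : 𝕜 →ᵃ[𝕜] E))) :
    ConvexOn 𝕜 s f := by
  have lineMap_combo (x y : E) {a b : 𝕜} (hab : a + b = 1) :
      lineMap x y (a • (0 : 𝕜) + b • (1 : 𝕜)) = a • x + b • y := by
    simp [lineMap_apply_module, ← eq_sub_of_add_eq hab]
  refine ⟨fun x hx y hy a b ha hb hab ↦ ?_, fun x hx y hy a b ha hb hab ↦ ?_⟩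
  all_goals
    have zero_mem : (0 : 𝕜) ∈ lineMap x y ⁻¹' s := by simpa using hx
    have one_mem : (1 : 𝕜) ∈ lineMap x y ⁻¹' s := by simpa using hy
  · simpa only [mem_preimage, lineMap_combo x y hab] using
      (h x hx y hy).1 zero_mem one_mem ha hb hab
  · simpa only [Function.comp_apply, lineMap_combo x y hab, lineMap_apply_zero,
      lineMap_apply_one] using (h x hx y hy).2 zero_mem one_mem ha hb hab

theorem mul_mul_add_sq_le_of_add_le_one {R : Type*} [CommRing R] [LinearOrder R]
    [IsOrderedRing R] {x y : R} (hx : 0 ≤ x) (hy : 0 ≤ y) (hxy : x + y ≤ 1) (u v : R) :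
    x * y * (u + v) ^ 2 ≤ x * u ^ 2 + y * v ^ 2 := by
  have hdefect : 0 ≤ (x * u ^ 2 + y * v ^ 2) * (1 - (x + y)) :=
    mul_nonneg (add_nonneg (mul_nonneg hx (sq_nonneg u)) (mul_nonneg hy (sq_nonneg v)))
      (sub_nonneg.2 hxy)
  calc x * y * (u + v) ^ 2
      ≤ x * y * (u + v) ^ 2 + ((x * u ^ 2 + y * v ^ 2) * (1 - (x + y)) + (x * u - y * v) ^ 2) :=
        le_add_of_nonneg_right (add_nonneg hdefect (sq_nonneg _))
    _ = x * u ^ 2 + y * v ^ 2 := by ring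

theorem convexOn_exp_neg_affineMap {E : Type*} [AddCommGroup E] [Module ℝ E] (φ : E →ᵃ[ℝ] ℝ) :
    ConvexOn ℝ univ fun x ↦ Real.exp (-φ x) :=
  convexOn_exp.comp_affineMap (-φ)

theorem hasDerivAt_exp_neg_affineMap (φ : ℝ →ᵃ[ℝ] ℝ) (t : ℝ) :
    HasDerivAt (fun t ↦ Real.exp (-φ t)) (Real.exp (-φ t) * -φ.linear 1) t :=
  φ.hasDerivAt.neg.exp

theorem convexOn_exp_neg_add_exp_neg_sub_exp_neg_add {I : Set ℝ} (hI : Convex ℝ I)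
    {φ ψ : ℝ →ᵃ[ℝ] ℝ} (h : ∀ t ∈ interior I, Real.exp (-φ t) + Real.exp (-ψ t) ≤ 1) :
    ConvexOn ℝ I fun t ↦ Real.exp (-φ t) + Real.exp (-ψ t) - Real.exp (-(φ t + ψ t)) := by
  set u := φ.linear 1
  set v := ψ.linear 1
  have hφ (t : ℝ) : HasDerivAt (fun t ↦ Real.exp (-φ t)) (Real.exp (-φ t) * -u) t :=
    hasDerivAt_exp_neg_affineMap φ t
  have hψ (t : ℝ) : HasDerivAt (fun t ↦ Real.exp (-ψ t)) (Real.exp (-ψ t) * -v) t :=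
    hasDerivAt_exp_neg_affineMap ψ t
  have hφψ (t : ℝ) : HasDerivAt (fun t ↦ Real.exp (-(φ t + ψ t)))
      (Real.exp (-(φ t + ψ t)) * -(u + v)) t :=
    hasDerivAt_exp_neg_affineMap (φ + ψ) t
  have hfirst (t : ℝ) := ((hφ t).add (hψ t)).sub (hφψ t)
  have hsecond (t : ℝ) :=
    (((hφ t).mul_const (-u)).add ((hψ t).mul_const (-v))).sub ((hφψ t).mul_const (-(u + v)))
  refine convexOn_of_hasDerivWithinAt2_nonneg hI
    (fun t _ ↦ (hfirst t).continuousAt.continuousWithinAt)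
    (fun t _ ↦ (hfirst t).hasDerivWithinAt) (fun t _ ↦ (hsecond t).hasDerivWithinAt)
    fun t ht ↦ ?_
  have hquadratic := mul_mul_add_sq_le_of_add_le_one (Real.exp_nonneg (-φ t))
    (Real.exp_nonneg (-ψ t)) (h t ht) u v
  rw [neg_add, Real.exp_add]
  linarith

theorem convex_qosDom : Convex ℝ qosDom := by
  have hfst : ConvexOn ℝ univ fun p : ℝ × ℝ ↦ Real.exp (-p.1) :=
    convexOn_exp_neg_affineMap (AffineMap.fst : ℝ × ℝ →ᵃ[ℝ] ℝ)
  have hsnd : ConvexOn ℝ univ fun p : ℝ × ℝ ↦ Real.exp (-p.2) :=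
    convexOn_exp_neg_affineMap (AffineMap.snd : ℝ × ℝ →ᵃ[ℝ] ℝ)
  have hquadrant : Convex ℝ (Ici (0 : ℝ × ℝ)) := convex_Ici 0
  convert hquadrant.inter ((hfst.add hsnd).convex_le 1) using 1
  ext p
  simp [qosDom, Prod.le_def, and_assoc]

/-- The per-channel-state term `h(a,b) = e^{−a} + e^{−b} − e^{−(a+b)}` of
the log-moment generating function is convex on
`S = {(a,b) : a ≥ 0, b ≥ 0, e^{−a} + e^{−b} ≤ 1}`, and `S` is convex. -/
theorem per_state_term_convexOn :
    Convex ℝ qosDom ∧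
    ConvexOn ℝ qosDom
      (fun p : ℝ × ℝ =>
        Real.exp (-p.1) + Real.exp (-p.2) - Real.exp (-(p.1 + p.2))) := by
  refine ⟨convex_qosDom, convexOn_of_convexOn_comp_lineMap fun p _ q _ ↦ ?_⟩
  have hline : Convex ℝ (lineMap p q ⁻¹' qosDom) := convex_qosDom.affine_preimage _
  exact convexOn_exp_neg_add_exp_neg_sub_exp_neg_add hline
    (φ := AffineMap.fst.comp (lineMap p q)) (ψ := AffineMap.snd.comp (lineMap p q))
    fun t ht ↦ (interior_subset ht).2.2
end

section
/- Let (Ω, μ) be a probability space, n > 0 a blocklength, r₀ > 0, and R : Ω → ℝ a measurable coding-rate function with R(ω) ≥ r₀ for μ-almost every ω. Then the moment generating functional M(θ,ϑ) = ∫_Ω ( e^{−nϑ} + (1 − e^{−nϑ}) e^{−nθR(ω)} ) dμ(ω) is jointly convex in (θ,ϑ) on the set D = {(θ,ϑ) ∈ ℝ² : θ ≥ 0, ϑ ≥ 0, e^{−nϑ} + e^{−nθr₀} ≤ 1}, and D is a convex set. (Joint convexity of the service-process moment functional underlying Theorem 2, Claim 1.) -/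
open MeasureTheory

/-!
Write `x = e^{-nϑ}` and `y = e^{-nθR(ω)}`. Along a line in the `(θ, ϑ)`-plane with `x' = u x` and
`y' = v y`, the integrand `x + (1 - x) y` has second derivative `u² x + v² y - (u + v)² x y`. If
`x + y ≤ 1`, then `x (1 - y) ≥ x²` and `y (1 - x) ≥ y²`, so this is at least `(u x - v y)² ≥ 0`.
On the domain, `x + y ≤ 1` holds for almost every `ω`, because replacing `r₀` by `R ω ≥ r₀` only
decreases `y`.
-/

theorem convexOn_of_forall_comp_lineMap {𝕜 E β : Type*} [Ring 𝕜] [PartialOrder 𝕜]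
    [IsOrderedRing 𝕜] [AddCommGroup E] [Module 𝕜 E] [AddCommMonoid β] [PartialOrder β] [SMul 𝕜 β]
    {s : Set E} {f : E → β} (hs : Convex 𝕜 s)
    (hf : ∀ p ∈ s, ∀ q ∈ s, ConvexOn 𝕜 (Set.Icc 0 1) (f ∘ AffineMap.lineMap (k := 𝕜) p q)) :
    ConvexOn 𝕜 s f := by
  refine ⟨hs, fun p hp q hq a b ha hb hab ↦ ?_⟩
  have hline := (hf p hp q hq).2 (Set.left_mem_Icc.2 zero_le_one)
    (Set.right_mem_Icc.2 zero_le_one) ha hb hab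
  simpa [AffineMap.lineMap_apply_module, ← eq_sub_of_add_eq hab] using hline

theorem add_sq_mul_mul_le_of_add_le_one {𝕜 : Type*} [CommRing 𝕜] [LinearOrder 𝕜]
    [IsStrictOrderedRing 𝕜] {x y : 𝕜} (u v : 𝕜) (hx : 0 ≤ x) (hy : 0 ≤ y) (hxy : x + y ≤ 1) :
    (u + v) ^ 2 * (x * y) ≤ u ^ 2 * x + v ^ 2 * y := by
  have hx_sq : x ^ 2 ≤ x * (1 - y) := by nlinarith
  have hy_sq : y ^ 2 ≤ y * (1 - x) := by nlinarith
  have hu := mul_le_mul_of_nonneg_left hx_sq (sq_nonneg u)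
  have hv := mul_le_mul_of_nonneg_left hy_sq (sq_nonneg v)
  linarith [sq_nonneg (u * x - v * y)]

theorem convexOn_add_one_sub_mul_of_hasDerivAt {s : Set ℝ} (hs : Convex ℝ s) {x y : ℝ → ℝ}
    {u v : ℝ} (hx' : ∀ t ∈ s, HasDerivAt x (u * x t) t)
    (hy' : ∀ t ∈ s, HasDerivAt y (v * y t) t)
    (hx : ∀ t ∈ s, 0 ≤ x t) (hy : ∀ t ∈ s, 0 ≤ y t) (hxy : ∀ t ∈ s, x t + y t ≤ 1) :
    ConvexOn ℝ s (fun t ↦ x t + (1 - x t) * y t) := by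
  have hderiv (t : ℝ) (ht : t ∈ s) : HasDerivAt (fun t ↦ x t + (1 - x t) * y t)
      (u * x t + v * y t - (u + v) * (x t * y t)) t :=
    ((hx' t ht).add (((hx' t ht).const_sub 1).mul (hy' t ht))).congr_deriv (by ring)
  have hderiv2 (t : ℝ) (ht : t ∈ s) : HasDerivAt (fun t ↦ u * x t + v * y t - (u + v) * (x t * y t))
      (u ^ 2 * x t + v ^ 2 * y t - (u + v) ^ 2 * (x t * y t)) t :=
    ((((hx' t ht).const_mul u).add ((hy' t ht).const_mul v)).sub
      (((hx' t ht).mul (hy' t ht)).const_mul (u + v))).congr_deriv (by ring)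
  refine convexOn_of_hasDerivWithinAt2_nonneg hs
    (fun t ht ↦ (hderiv t ht).continuousAt.continuousWithinAt)
    (fun t ht ↦ (hderiv t (interior_subset ht)).hasDerivWithinAt)
    (fun t ht ↦ (hderiv2 t (interior_subset ht)).hasDerivWithinAt)
    (fun t ht ↦ sub_nonneg.2 ?_)
  have hts := interior_subset ht
  exact add_sq_mul_mul_le_of_add_le_one u v (hx t hts) (hy t hts) (hxy t hts)

theorem convexOn_exp_affineMap_add_one_sub_mul {E : Type*} [AddCommGroup E] [Module ℝ E]
    (a b : E →ᵃ[ℝ] ℝ) :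
    ConvexOn ℝ {p | Real.exp (a p) + Real.exp (b p) ≤ 1}
      (fun p ↦ Real.exp (a p) + (1 - Real.exp (a p)) * Real.exp (b p)) := by
  have hconvex : Convex ℝ {p | Real.exp (a p) + Real.exp (b p) ≤ 1} := by
    have hsum := (convexOn_exp.comp_affineMap a).add (convexOn_exp.comp_affineMap b)
    simpa using hsum.convex_le 1
  refine convexOn_of_forall_comp_lineMap hconvex fun p hp q hq ↦ ?_
  have hasDerivAt_exp_line (c : E →ᵃ[ℝ] ℝ) (t : ℝ) :
      HasDerivAt (fun t ↦ Real.exp (c (AffineMap.lineMap p q t)))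
        ((c.comp (AffineMap.lineMap p q)).linear 1 * Real.exp (c (AffineMap.lineMap p q t))) t :=
    (c.comp (AffineMap.lineMap p q)).hasDerivAt.exp.congr_deriv (mul_comm _ _)
  exact convexOn_add_one_sub_mul_of_hasDerivAt (convex_Icc 0 1)
    (fun t _ ↦ hasDerivAt_exp_line a t) (fun t _ ↦ hasDerivAt_exp_line b t)
    (fun _ _ ↦ (Real.exp_pos _).le) (fun _ _ ↦ (Real.exp_pos _).le)
    (fun _ ht ↦ hconvex.lineMap_mem hp hq ht)

theorem convexOn_exp_neg_mul_add_one_sub_mul (n r : ℝ) :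
    ConvexOn ℝ {p : ℝ × ℝ | Real.exp (-(n * p.2)) + Real.exp (-(n * p.1 * r)) ≤ 1}
      (fun p ↦ Real.exp (-(n * p.2)) +
        (1 - Real.exp (-(n * p.2))) * Real.exp (-(n * p.1 * r))) := by
  have h := convexOn_exp_affineMap_add_one_sub_mul
    (-n • LinearMap.snd ℝ ℝ ℝ).toAffineMap (-(n * r) • LinearMap.fst ℝ ℝ ℝ).toAffineMap
  simpa [mul_right_comm] using h

theorem integrable_exp_neg_mul_of_ae_le {Ω : Type*} [MeasurableSpace Ω] {μ : Measure Ω}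
    [IsFiniteMeasure μ] {R : Ω → ℝ} {r t : ℝ} (ht : 0 ≤ t) (hRmeas : AEMeasurable R μ)
    (hR : ∀ᵐ ω ∂μ, r ≤ R ω) : Integrable (fun ω ↦ Real.exp (-(t * R ω))) μ := by
  have h := ProbabilityTheory.integrable_exp_mul_of_le t (-r) ht hRmeas.neg
    (hR.mono fun _ ↦ neg_le_neg)
  simpa using h

theorem MGF_jointly_convexOn_general
    {Ω : Type*} [MeasurableSpace Ω] (μ : Measure Ω) [IsFiniteMeasure μ]
    (n r₀ : ℝ) (hn : 0 < n)
    (R : Ω → ℝ) (hRmeas : AEMeasurable R μ) (hR : ∀ᵐ ω ∂μ, r₀ ≤ R ω) :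
    ConvexOn ℝ {p : ℝ × ℝ | 0 ≤ p.1 ∧ 0 ≤ p.2 ∧
        Real.exp (-(n * p.2)) + Real.exp (-(n * p.1 * r₀)) ≤ 1}
      (fun p : ℝ × ℝ =>
        ∫ ω, (Real.exp (-(n * p.2)) +
          (1 - Real.exp (-(n * p.2))) * Real.exp (-(n * p.1 * R ω))) ∂μ) := by
  have hdomain : Convex ℝ {p : ℝ × ℝ | 0 ≤ p.1 ∧ 0 ≤ p.2 ∧
      Real.exp (-(n * p.2)) + Real.exp (-(n * p.1 * r₀)) ≤ 1} := by
    have hquadrant := convex_Ici (𝕜 := ℝ) (0 : ℝ × ℝ)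
    simpa only [Set.inter_def, Set.mem_Ici, Set.mem_ofPred_eq, Prod.le_def, Prod.fst_zero,
      Prod.snd_zero, and_assoc]
      using hquadrant.inter (convexOn_exp_neg_mul_add_one_sub_mul n r₀).1
  refine integral_convexOn_of_integrand_ae hdomain ?_ fun p ⟨hθ, _, _⟩ ↦ ?_
  · filter_upwards [hR] with ω hω
    refine (convexOn_exp_neg_mul_add_one_sub_mul n (R ω)).subset ?_ hdomain
    rintro p ⟨hθ, _, hp⟩
    have hexp : Real.exp (-(n * p.1 * R ω)) ≤ Real.exp (-(n * p.1 * r₀)) := by gcongr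
    exact (add_le_add_right hexp _).trans hp
  · have hnθ : 0 ≤ n * p.1 := mul_nonneg hn.le hθ
    exact (integrable_const _).add ((integrable_exp_neg_mul_of_ae_le hnθ hRmeas hR).const_mul _)

/-- Joint convexity of the service-process moment generating functional
(Theorem 2, Claim 1): with coding rate `R ≥ r₀ > 0` a.e., the functional
`M(θ,ϑ) = ∫ (e^{−nϑ} + (1 − e^{−nϑ}) e^{−nθR(ω)}) dμ` is jointly convex
in `(θ,ϑ)` on `D = {(θ,ϑ) : θ ≥ 0, ϑ ≥ 0, e^{−nϑ} + e^{−nθr₀} ≤ 1}`,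
and `D` is a convex set. -/
theorem MGF_jointly_convexOn
    {Ω : Type*} [MeasurableSpace Ω] (μ : Measure Ω) [IsProbabilityMeasure μ]
    (n r₀ : ℝ) (hn : 0 < n) (hr₀ : 0 < r₀)
    (R : Ω → ℝ) (hRmeas : Measurable R) (hR : ∀ᵐ ω ∂μ, r₀ ≤ R ω) :
    Convex ℝ {p : ℝ × ℝ | 0 ≤ p.1 ∧ 0 ≤ p.2 ∧
        Real.exp (-(n * p.2)) + Real.exp (-(n * p.1 * r₀)) ≤ 1} ∧
    ConvexOn ℝ {p : ℝ × ℝ | 0 ≤ p.1 ∧ 0 ≤ p.2 ∧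
        Real.exp (-(n * p.2)) + Real.exp (-(n * p.1 * r₀)) ≤ 1}
      (fun p : ℝ × ℝ =>
        ∫ ω, (Real.exp (-(n * p.2)) +
          (1 - Real.exp (-(n * p.2))) * Real.exp (-(n * p.1 * R ω))) ∂μ) := by
  have hM := MGF_jointly_convexOn_general μ n r₀ hn R hRmeas.aemeasurable hR
  exact ⟨hM.1, hM⟩
end

section
/- Let (Ω, μ) be a probability space, n > 0 a blocklength, r₀ > 0, and R : Ω → ℝ a measurable coding-rate function with R(ω) ≥ r₀ for μ-almost every ω. For every u ∈ ℝ, the feasible QoS region F(u) = {(θ,ϑ) ∈ ℝ² : θ ≥ 0, ϑ ≥ 0, e^{−nϑ} + e^{−nθr₀} ≤ 1, and Λ(θ,ϑ) ≤ u} is a convex set, where Λ(θ,ϑ) = log ∫_Ω ( e^{−nϑ} + (1 − e^{−nϑ}) e^{−nθR(ω)} ) dμ(ω). Hence time-sharing (convex combination) of two feasible delay/reliability QoS operating points remains feasible. -/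
open MeasureTheory

/-!
Writing `x = -nϑ` and `y = -nθR(ω)`, the integrand of `Λ` is the function
`e^x + (1 - e^x) e^y` evaluated at a point depending linearly on `(θ, ϑ)`. With `a = e^x` and
`b = e^y`, its Hessian has the quadratic form
`a(1 - b)β² - 2abβδ + b(1 - a)δ² = (1 - a - b)(aβ² + bδ²) + (aβ - bδ)²`,
so it is convex on the convex set `e^x + e^y ≤ 1`. Since `R ≥ r₀` almost everywhere, the constraint
at `r₀` puts `(x, y)` in that set for almost every `ω`; hence the integral `e^Λ` is convex, and
`Λ ≤ u` is its sublevel condition `e^Λ ≤ e^u`.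
-/

section Convexity

theorem convexOn_of_forall_convexOn_comp_lineMap {𝕜 E β : Type*} [Field 𝕜] [LinearOrder 𝕜]
    [IsStrictOrderedRing 𝕜] [AddCommGroup E] [Module 𝕜 E] [AddCommMonoid β] [PartialOrder β]
    [SMul 𝕜 β] {s : Set E} {f : E → β} (hs : Convex 𝕜 s)
    (hf : ∀ x ∈ s, ∀ y ∈ s, ConvexOn 𝕜 (Set.Icc 0 1) fun t : 𝕜 ↦ f (AffineMap.lineMap x y t)) :
    ConvexOn 𝕜 s f := by
  refine ⟨hs, fun x hx y hy a b ha hb hab ↦ ?_⟩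
  have hline : AffineMap.lineMap x y b = a • x + b • y := by
    rw [AffineMap.lineMap_apply_module, ← hab, add_sub_cancel_right]
  simpa [hline] using (hf x hx y hy).2 (Set.left_mem_Icc.2 zero_le_one)
    (Set.right_mem_Icc.2 zero_le_one) ha hb hab

theorem convex_setOf_log_le {E : Type*} [AddCommMonoid E] [Module ℝ E] {s : Set E} {f : E → ℝ}
    (hf : ConvexOn ℝ s f) (hpos : ∀ x ∈ s, 0 < f x) (u : ℝ) :
    Convex ℝ {x ∈ s | Real.log (f x) ≤ u} := by
  have hset : {x ∈ s | Real.log (f x) ≤ u} = {x ∈ s | f x ≤ Real.exp u} :=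
    Set.ext fun x ↦ and_congr_right fun hx ↦ Real.log_le_iff_le_exp (hpos x hx)
  exact hset ▸ hf.convex_le _

end Convexity

section ExpProbOr

/-- The logarithms `(x, y)` of two positive weights `e^x`, `e^y` with total mass at most one:
the region on which `expProbOr` is convex. -/
def logSubprob : Set (ℝ × ℝ) :=
  {z | Real.exp z.1 + Real.exp z.2 ≤ 1}

/-- The probability `e^x + (1 - e^x) e^y` that at least one of two independent events with
log-probabilities `x` and `y` occurs. At `x = -nϑ`, `y = -nθR(ω)` it is the integrand of the moment
generating function of the service process. -/
noncomputable def expProbOr (z : ℝ × ℝ) : ℝ :=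
  Real.exp z.1 + (1 - Real.exp z.1) * Real.exp z.2

theorem convex_logSubprob : Convex ℝ logSubprob := by
  have hfst := convexOn_exp.comp_linearMap (LinearMap.fst ℝ ℝ ℝ)
  have hsnd := convexOn_exp.comp_linearMap (LinearMap.snd ℝ ℝ ℝ)
  simpa [logSubprob] using (hfst.add hsnd).convex_le 1

theorem exp_fst_le_expProbOr {z : ℝ × ℝ} (hz : z ∈ logSubprob) :
    Real.exp z.1 ≤ expProbOr z := by
  have hfst : Real.exp z.1 ≤ 1 := (le_add_of_nonneg_right (Real.exp_pos _).le).trans hz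
  exact le_add_of_nonneg_right (mul_nonneg (sub_nonneg.2 hfst) (Real.exp_pos _).le)

theorem expProbOr_le_one {z : ℝ × ℝ} (hz : z ∈ logSubprob) : expProbOr z ≤ 1 :=
  calc expProbOr z = Real.exp z.1 + Real.exp z.2 - Real.exp z.1 * Real.exp z.2 := by
        rw [expProbOr]; ring
    _ ≤ Real.exp z.1 + Real.exp z.2 := sub_le_self _ (by positivity)
    _ ≤ 1 := hz

theorem hasDerivAt_exp_lineMap (x y t : ℝ) :
    HasDerivAt (fun t : ℝ ↦ Real.exp (AffineMap.lineMap x y t))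
      (Real.exp (AffineMap.lineMap x y t) * (y - x)) t :=
  AffineMap.hasDerivAt_lineMap.exp

theorem expProbOr_hessian_nonneg {a b : ℝ} (ha : 0 ≤ a) (hb : 0 ≤ b) (hab : a + b ≤ 1)
    (β δ : ℝ) : 0 ≤ a * (1 - b) * β ^ 2 - 2 * (a * b) * (β * δ) + b * (1 - a) * δ ^ 2 :=
  calc 0 ≤ (1 - (a + b)) * (a * β ^ 2 + b * δ ^ 2) + (a * β - b * δ) ^ 2 :=
        add_nonneg (mul_nonneg (sub_nonneg.2 hab) (by positivity)) (sq_nonneg _)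
    _ = a * (1 - b) * β ^ 2 - 2 * (a * b) * (β * δ) + b * (1 - a) * δ ^ 2 := by ring

theorem convexOn_expProbOr_lineMap {z w : ℝ × ℝ} (hz : z ∈ logSubprob) (hw : w ∈ logSubprob) :
    ConvexOn ℝ (Set.Icc 0 1) fun t : ℝ ↦ expProbOr (AffineMap.lineMap z w t) := by
  set β := w.1 - z.1
  set δ := w.2 - z.2
  let a (t : ℝ) : ℝ := Real.exp (AffineMap.lineMap z.1 w.1 t)
  let b (t : ℝ) : ℝ := Real.exp (AffineMap.lineMap z.2 w.2 t)
  have ha (t : ℝ) : HasDerivAt a (a t * β) t := hasDerivAt_exp_lineMap z.1 w.1 t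
  have hb (t : ℝ) : HasDerivAt b (b t * δ) t := hasDerivAt_exp_lineMap z.2 w.2 t
  have hf (t : ℝ) : HasDerivAt (fun t ↦ a t + (1 - a t) * b t)
      (a t * β + (-(a t * β) * b t + (1 - a t) * (b t * δ))) t :=
    (ha t).fun_add (((ha t).const_sub 1).fun_mul (hb t))
  have hf' (t : ℝ) : HasDerivAt
      (fun t ↦ a t * β + (-(a t * β) * b t + (1 - a t) * (b t * δ)))
      (a t * (1 - b t) * β ^ 2 - 2 * (a t * b t) * (β * δ) + b t * (1 - a t) * δ ^ 2) t :=
    (((ha t).mul_const β).fun_add ((((ha t).mul_const β).fun_neg.fun_mul (hb t)).fun_add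
      (((ha t).const_sub 1).fun_mul ((hb t).mul_const δ)))).congr_deriv (by ring)
  have hab {t : ℝ} (ht : t ∈ Set.Icc (0 : ℝ) 1) : a t + b t ≤ 1 := by
    simpa [logSubprob, a, b] using convex_logSubprob.lineMap_mem hz hw ht
  have hconvex : ConvexOn ℝ (Set.Icc 0 1) fun t ↦ a t + (1 - a t) * b t :=
    convexOn_of_hasDerivWithinAt2_nonneg (convex_Icc 0 1)
      (fun t _ ↦ (hf t).continuousAt.continuousWithinAt)
      (fun t _ ↦ (hf t).hasDerivWithinAt) (fun t _ ↦ (hf' t).hasDerivWithinAt)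
      fun t ht ↦ expProbOr_hessian_nonneg (Real.exp_pos _).le (Real.exp_pos _).le
        (hab (interior_subset ht)) β δ
  simpa [expProbOr, a, b] using hconvex

theorem convexOn_expProbOr : ConvexOn ℝ logSubprob expProbOr :=
  convexOn_of_forall_convexOn_comp_lineMap convex_logSubprob fun _ hz _ hw ↦
    convexOn_expProbOr_lineMap hz hw

end ExpProbOr

section ServiceMGF

/-- The log-probabilities `(-nϑ, -nθr)` attached to the QoS exponents `p = (θ, ϑ)` at blocklength
`n` and coding rate `r`, as a linear map in `p`. -/
def qosExponents (n r : ℝ) : ℝ × ℝ →ₗ[ℝ] ℝ × ℝ where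
  toFun p := (-(n * p.2), -(n * p.1 * r))
  map_add' p q := by ext <;> simp only [Prod.fst_add, Prod.snd_add] <;> ring
  map_smul' c p := by
    ext <;> simp only [Prod.smul_fst, Prod.smul_snd, smul_eq_mul, RingHom.id_apply] <;> ring

/-- The QoS exponent pairs `(θ, ϑ)` with `θ ≥ 0` that satisfy `e^{-nϑ} + e^{-nθr} ≤ 1`: the
domain on which the service process with coding rate at least `r` has a convex moment generating
function. -/
def qosDomain (n r : ℝ) : Set (ℝ × ℝ) :=
  {p | 0 ≤ p.1} ∩ qosExponents n r ⁻¹' logSubprob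

/-- The moment generating function `e^{Λ(θ,ϑ)}` of the service process at `p = (θ, ϑ)`. -/
noncomputable def serviceMGF {Ω : Type*} [MeasurableSpace Ω] (μ : Measure Ω) (n : ℝ) (R : Ω → ℝ)
    (p : ℝ × ℝ) : ℝ :=
  ∫ ω, expProbOr (qosExponents n (R ω) p) ∂μ

theorem convex_qosDomain (n r : ℝ) : Convex ℝ (qosDomain n r) :=
  ((convex_Ici 0).linear_preimage (LinearMap.fst ℝ ℝ ℝ)).inter
    (convex_logSubprob.linear_preimage _)

theorem monotone_qosDomain {n : ℝ} (hn : 0 ≤ n) : Monotone (qosDomain n) := by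
  rintro r r' hr p ⟨hθ : 0 ≤ p.1, hp⟩
  have hexp : Real.exp (-(n * p.2)) + Real.exp (-(n * p.1 * r')) ≤
      Real.exp (-(n * p.2)) + Real.exp (-(n * p.1 * r)) := by gcongr
  exact ⟨hθ, hexp.trans hp⟩

variable {Ω : Type*} [MeasurableSpace Ω] {μ : Measure Ω} [IsFiniteMeasure μ] {n r₀ : ℝ}
  {R : Ω → ℝ}

theorem integrable_expProbOr_qosExponents (hn : 0 ≤ n) (hRmeas : AEMeasurable R μ)
    (hR : ∀ᵐ ω ∂μ, r₀ ≤ R ω) {p : ℝ × ℝ} (hp : p ∈ qosDomain n r₀) :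
    Integrable (fun ω ↦ expProbOr (qosExponents n (R ω) p)) μ := by
  refine Integrable.of_bound ?_ 1 ?_
  · simp only [expProbOr, qosExponents, LinearMap.coe_mk, AddHom.coe_mk]
    fun_prop
  · filter_upwards [hR] with ω hω
    have hmem := (monotone_qosDomain hn hω hp).2
    rw [Real.norm_of_nonneg ((Real.exp_pos _).le.trans (exp_fst_le_expProbOr hmem))]
    exact expProbOr_le_one hmem

theorem serviceMGF_pos [NeZero μ] (hn : 0 ≤ n) (hRmeas : AEMeasurable R μ)
    (hR : ∀ᵐ ω ∂μ, r₀ ≤ R ω) {p : ℝ × ℝ} (hp : p ∈ qosDomain n r₀) :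
    0 < serviceMGF μ n R p :=
  calc 0 < ∫ _, Real.exp (-(n * p.2)) ∂μ := integral_exp_pos (integrable_const _)
    _ ≤ serviceMGF μ n R p := by
      refine integral_mono_ae (integrable_const _)
        (integrable_expProbOr_qosExponents hn hRmeas hR hp) ?_
      filter_upwards [hR] with ω hω
      exact exp_fst_le_expProbOr (monotone_qosDomain hn hω hp).2

theorem convexOn_serviceMGF (hn : 0 ≤ n) (hRmeas : AEMeasurable R μ)
    (hR : ∀ᵐ ω ∂μ, r₀ ≤ R ω) : ConvexOn ℝ (qosDomain n r₀) (serviceMGF μ n R) := by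
  refine integral_convexOn_of_integrand_ae (convex_qosDomain n r₀) ?_ fun p hp ↦
    integrable_expProbOr_qosExponents hn hRmeas hR hp
  filter_upwards [hR] with ω hω
  exact (convexOn_expProbOr.comp_linearMap (qosExponents n (R ω))).subset
    (fun p hp ↦ (monotone_qosDomain hn hω hp).2) (convex_qosDomain n r₀)

end ServiceMGF

/-- Convexity of the feasible QoS region (Definition 9): for any `u ∈ ℝ`,
`F(u) = {(θ,ϑ) : θ ≥ 0, ϑ ≥ 0, e^{−nϑ} + e^{−nθr₀} ≤ 1, Λ(θ,ϑ) ≤ u}` is a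
convex set, where `Λ(θ,ϑ) = log ∫ (e^{−nϑ} + (1 − e^{−nϑ}) e^{−nθR}) dμ`.
Hence time-sharing of two feasible QoS operating points remains feasible. -/
theorem feasible_QoS_region_convex
    {Ω : Type*} [MeasurableSpace Ω] (μ : Measure Ω) [IsProbabilityMeasure μ]
    (n r₀ : ℝ) (hn : 0 < n) (hr₀ : 0 < r₀)
    (R : Ω → ℝ) (hRmeas : Measurable R) (hR : ∀ᵐ ω ∂μ, r₀ ≤ R ω)
    (u : ℝ) :
    Convex ℝ {p : ℝ × ℝ | 0 ≤ p.1 ∧ 0 ≤ p.2 ∧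
        Real.exp (-(n * p.2)) + Real.exp (-(n * p.1 * r₀)) ≤ 1 ∧
        Real.log (∫ ω, (Real.exp (-(n * p.2)) +
          (1 - Real.exp (-(n * p.2))) * Real.exp (-(n * p.1 * R ω))) ∂μ)
          ≤ u} := by
  have hsublevel : Convex ℝ {p ∈ qosDomain n r₀ | Real.log (serviceMGF μ n R p) ≤ u} :=
    convex_setOf_log_le (convexOn_serviceMGF hn.le hRmeas.aemeasurable hR)
      (fun p hp ↦ serviceMGF_pos hn.le hRmeas.aemeasurable hR hp) u
  have hreliable : Convex ℝ {p : ℝ × ℝ | 0 ≤ p.2} :=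
    (convex_Ici 0).linear_preimage (LinearMap.snd ℝ ℝ ℝ)
  convert hsublevel.inter hreliable using 1
  ext p
  exact ⟨fun ⟨hθ, hϑ, hsum, hlog⟩ ↦ ⟨⟨⟨hθ, hsum⟩, hlog⟩, hϑ⟩,
    fun ⟨⟨⟨hθ, hsum⟩, hlog⟩, hϑ⟩ ↦ ⟨hθ, hϑ, hsum, hlog⟩⟩
end

section
/- Let (Ω, μ) be a probability space, n > 0 a blocklength, ϑ > 0 an error-rate-QoS exponent, and R : Ω → ℝ a nonnegative measurable coding-rate function. Then the ε-effective capacity θ ↦ EC(θ,ϑ) = −(1/(nθ)) log ∫_Ω ( e^{−nϑ} + (1 − e^{−nϑ}) e^{−nθR(ω)} ) dμ(ω) is nonincreasing in the delay-QoS exponent θ on (0, ∞): more stringent delay-bounded QoS requirements can only reduce the supportable constant arrival rate. -/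
open MeasureTheory

/-!
The integral is a moment generating function in disguise: if `Y` is `0` with probability `ε` and is
distributed as `R` otherwise, then `ε + (1 - ε) 𝔼[exp (t R)] = 𝔼[exp (t Y)]`. Hence, at `t = -n θ`,
the effective capacity is `cgf Y t / t`, the slope of the secant of the convex function `cgf Y` from
`0` to `t`. Secant slopes of a convex function increase with `t`, that is, decrease with `θ`.
-/

open ProbabilityTheory

section CumulantGeneratingFunction

variable {Ω : Type*} [MeasurableSpace Ω] {μ : Measure Ω} {X : Ω → ℝ} {t : ℝ}

lemma integral_exp_mul_sub_cgf [NeZero μ] (ht : t ∈ integrableExpSet X μ) :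
    ∫ ω, Real.exp (t * X ω - cgf X μ t) ∂μ = 1 := by
  have hpos : 0 < mgf X μ t := mgf_pos_iff.2 ht
  simp_rw [Real.exp_sub, integral_div, exp_cgf ht]
  exact div_self hpos.ne'

lemma integrable_exp_mul_sub (ht : t ∈ integrableExpSet X μ) (c : ℝ) :
    Integrable (fun ω ↦ Real.exp (t * X ω - c)) μ := by
  simpa only [Real.exp_sub] using (integrable_of_mem_integrableExpSet ht).div_const (Real.exp c)

lemma convexOn_cgf : ConvexOn ℝ (integrableExpSet X μ) (cgf X μ) := by
  refine ⟨convex_integrableExpSet, fun x hx y hy a b ha hb hab ↦ ?_⟩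
  obtain rfl | hμ := eq_zero_or_neZero μ
  · simp
  have hxy := convex_integrableExpSet hx hy ha hb hab
  simp only [smul_eq_mul] at hxy ⊢
  set c := a * cgf X μ x + b * cgf X μ y
  -- Normalising by `cgf` makes both exponential moments `1`, so integrating the convexity
  -- inequality of `exp` suffices, without Hölder.
  have pointwise (ω : Ω) : Real.exp ((a * x + b * y) * X ω - c) ≤
      a * Real.exp (x * X ω - cgf X μ x) + b * Real.exp (y * X ω - cgf X μ y) := by
    have hexponent : (a * x + b * y) * X ω - c =
        a * (x * X ω - cgf X μ x) + b * (y * X ω - cgf X μ y) := by ring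
    rw [hexponent]
    exact convexOn_exp.2 (Set.mem_univ _) (Set.mem_univ _) ha hb hab
  have hintx := (integrable_exp_mul_sub hx (cgf X μ x)).const_mul a
  have hinty := (integrable_exp_mul_sub hy (cgf X μ y)).const_mul b
  have hle : Real.exp (cgf X μ (a * x + b * y) - c) ≤ 1 := calc
    Real.exp (cgf X μ (a * x + b * y) - c)
      = ∫ ω, Real.exp ((a * x + b * y) * X ω - c) ∂μ := by
        simp_rw [Real.exp_sub, integral_div, exp_cgf hxy, mgf]
    _ ≤ ∫ ω, (a * Real.exp (x * X ω - cgf X μ x) + b * Real.exp (y * X ω - cgf X μ y)) ∂μ :=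
        integral_mono (integrable_exp_mul_sub hxy c) (hintx.add hinty) pointwise
    _ = 1 := by
        rw [integral_add hintx hinty, integral_const_mul, integral_const_mul,
          integral_exp_mul_sub_cgf hx, integral_exp_mul_sub_cgf hy, mul_one, mul_one, hab]
  exact sub_nonpos.1 (Real.exp_le_one_iff.1 hle)

lemma monotoneOn_cgf_div_self [IsZeroOrProbabilityMeasure μ] :
    MonotoneOn (fun t ↦ cgf X μ t / t) (integrableExpSet X μ \ {0}) := by
  intro s hs t ht hst
  have h0 : (0 : ℝ) ∈ integrableExpSet X μ := by simp [integrableExpSet]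
  simpa using convexOn_cgf.secant_mono h0 hs.1 ht.1 hs.2 ht.2 hst

lemma integrable_exp_neg_mul_of_nonneg [IsFiniteMeasure μ] {c : ℝ} (hc : 0 ≤ c)
    (hX : AEMeasurable X μ) (hX0 : 0 ≤ᵐ[μ] X) :
    Integrable (fun ω ↦ Real.exp (-(c * X ω))) μ := by
  simpa using integrable_exp_mul_of_le c 0 hc hX.neg (hX0.mono fun _ ↦ neg_nonpos.2)

end CumulantGeneratingFunction

section ZeroMixture

/-- The law of the random variable that is `0` with probability `ε` and is distributed as `X` under
`μ` with probability `1 - ε`. With `X` the coding rate and `ε` the decoding error probability, this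
is the law of the rate actually served. Junk values: `ENNReal.ofReal` truncates negative weights to
`0` when `ε ∉ [0, 1]`, and `μ.map X = 0` when `X` is not a.e.-measurable. -/
noncomputable def zeroMixture {Ω : Type*} [MeasurableSpace Ω] (ε : ℝ) (X : Ω → ℝ)
    (μ : Measure Ω) : Measure ℝ :=
  ENNReal.ofReal ε • Measure.dirac 0 + ENNReal.ofReal (1 - ε) • μ.map X

variable {Ω : Type*} [MeasurableSpace Ω] {μ : Measure Ω} {X : Ω → ℝ} {ε t : ℝ}

lemma isProbabilityMeasure_zeroMixture [IsProbabilityMeasure μ] (hX : AEMeasurable X μ)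
    (hε : ε ∈ Set.Icc 0 1) : IsProbabilityMeasure (zeroMixture ε X μ) := by
  have := Measure.isProbabilityMeasure_map hX
  constructor
  simp [zeroMixture, ← ENNReal.ofReal_add hε.1 (sub_nonneg.2 hε.2)]

lemma integrable_exp_mul_id_dirac {a : ℝ} :
    Integrable (fun x : ℝ ↦ Real.exp (t * id x)) (Measure.dirac a) :=
  integrable_dirac (by simp)

lemma integrable_exp_mul_id_map (hX : AEMeasurable X μ) (ht : t ∈ integrableExpSet X μ) :
    Integrable (fun x ↦ Real.exp (t * id x)) (μ.map X) :=
  (integrable_map_measure (by fun_prop) hX).2 ht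

lemma integrableExpSet_subset_integrableExpSet_zeroMixture (hX : AEMeasurable X μ) :
    integrableExpSet X μ ⊆ integrableExpSet id (zeroMixture ε X μ) := fun _ ht ↦
  (integrable_exp_mul_id_dirac.smul_measure ENNReal.ofReal_ne_top).add_measure
    ((integrable_exp_mul_id_map hX ht).smul_measure ENNReal.ofReal_ne_top)

lemma mgf_id_zeroMixture (hX : AEMeasurable X μ) (hε : ε ∈ Set.Icc 0 1)
    (ht : t ∈ integrableExpSet X μ) :
    mgf id (zeroMixture ε X μ) t = ε + (1 - ε) * mgf X μ t := by
  rw [zeroMixture, mgf_add_measure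
      (integrable_exp_mul_id_dirac.smul_measure ENNReal.ofReal_ne_top)
      ((integrable_exp_mul_id_map hX ht).smul_measure ENNReal.ofReal_ne_top),
    mgf_smul_measure, mgf_smul_measure, mgf_id_map hX, mgf_dirac',
    ENNReal.toReal_ofReal hε.1, ENNReal.toReal_ofReal (sub_nonneg.2 hε.2)]
  simp

lemma monotoneOn_log_add_mul_mgf_div_self [IsProbabilityMeasure μ] (hε : ε ∈ Set.Icc 0 1) :
    MonotoneOn (fun t ↦ Real.log (ε + (1 - ε) * mgf X μ t) / t) (integrableExpSet X μ \ {0}) := by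
  intro s hs t ht hst
  have hX : AEMeasurable X μ :=
    aemeasurable_of_integrable_exp_mul (u := s) (v := 0) hs.2 hs.1 (by simp)
  have := isProbabilityMeasure_zeroMixture hX hε
  have hsub := integrableExpSet_subset_integrableExpSet_zeroMixture (ε := ε) hX
  have hmono := monotoneOn_cgf_div_self ⟨hsub hs.1, hs.2⟩ ⟨hsub ht.1, ht.2⟩ hst
  simpa only [cgf, mgf_id_zeroMixture hX hε hs.1, mgf_id_zeroMixture hX hε ht.1] using hmono

end ZeroMixture

theorem eps_effective_capacity_antitoneOn_general
    {Ω : Type*} [MeasurableSpace Ω] (μ : Measure Ω) [IsProbabilityMeasure μ]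
    (n ε : ℝ) (hn : 0 < n) (hε : ε ∈ Set.Icc 0 1) (R : Ω → ℝ) :
    AntitoneOn
      (fun θ : ℝ => -(1 / (n * θ)) *
        Real.log (∫ ω, (ε + (1 - ε) * Real.exp (-(n * θ * R ω))) ∂μ))
      {θ : ℝ | θ ≠ 0 ∧ Integrable (fun ω ↦ Real.exp (-(n * θ * R ω))) μ} := by
  have hanti : Antitone fun θ : ℝ ↦ -(n * θ) := fun _ _ h ↦
    neg_le_neg (mul_le_mul_of_nonneg_left h hn.le)
  refine ((monotoneOn_log_add_mul_mgf_div_self (μ := μ) (X := R) hε).comp_AntitoneOn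
    (hanti.antitoneOn _) ?mapsTo).congr ?eqOn
  case mapsTo =>
    rintro θ ⟨hθ, hint⟩
    exact ⟨by simpa [integrableExpSet] using hint, by simp [hn.ne', hθ]⟩
  case eqOn =>
    rintro θ ⟨-, hint⟩
    have hmgf : ∫ ω, (ε + (1 - ε) * Real.exp (-(n * θ * R ω))) ∂μ =
        ε + (1 - ε) * mgf R μ (-(n * θ)) := by
      rw [integral_add (integrable_const ε) (hint.const_mul (1 - ε)), integral_const_mul]
      simp [mgf]
    simp only [hmgf, Function.comp_apply, div_neg]
    ring

/-- The ε-effective capacity is nonincreasing in the delay-QoS exponent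
`θ` on `(0, ∞)`: more stringent delay-bounded QoS requirements can only
reduce the supportable constant arrival rate. -/
theorem eps_effective_capacity_antitoneOn
    {Ω : Type*} [MeasurableSpace Ω] (μ : Measure Ω) [IsProbabilityMeasure μ]
    (n ϑ : ℝ) (hn : 0 < n) (hϑ : 0 < ϑ)
    (R : Ω → ℝ) (hRmeas : Measurable R) (hRnonneg : ∀ ω, 0 ≤ R ω) :
    AntitoneOn
      (fun θ : ℝ => -(1 / (n * θ)) *
        Real.log (∫ ω, (Real.exp (-(n * ϑ)) +
          (1 - Real.exp (-(n * ϑ))) * Real.exp (-(n * θ * R ω))) ∂μ))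
      (Set.Ioi (0 : ℝ)) := by
  have hε : Real.exp (-(n * ϑ)) ∈ Set.Icc 0 1 :=
    ⟨Real.exp_nonneg _, Real.exp_le_one_iff.2 (neg_nonpos.2 (mul_pos hn hϑ).le)⟩
  exact (eps_effective_capacity_antitoneOn_general μ n _ hn hε R).mono fun θ hθ ↦
    ⟨hθ.ne', integrable_exp_neg_mul_of_nonneg (mul_pos hn hθ).le hRmeas.aemeasurable
      (.of_forall hRnonneg)⟩
end

section
/- Let (Ω, μ) be a probability space, n > 0 a blocklength, ϑ > 0 an error-rate-QoS exponent, and R : Ω → ℝ a nonnegative, integrable, measurable coding-rate function. Then the ε-effective capacity satisfies EC(θ,ϑ) → (1 − e^{−nϑ}) ∫_Ω R dμ as θ → 0⁺: as the delay-bounded QoS constraint is relaxed, the ε-effective capacity converges to the mean service rate discounted by the decoding success probability 1 − e^{−nϑ}. -/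
open MeasureTheory

/-!
With `t = nθ`, the expectation inside the logarithm is `M t = ε + (1 - ε) E[exp (-t R)]`, so
`M 0 = 1` and `EC = -(log M t - log M 0) / t` is minus a difference quotient of `log ∘ M` at `0`.
It therefore suffices that `t ↦ E[exp (t X)]` has right derivative `E[X]` at `0`. Since
`t ↦ exp (t X)` is convex, its difference quotients decrease to `X` as `t` decreases to `0`;
they lie between `X` and any single one of them, and dominated convergence applies as soon as
`X` and one `exp (s X)` with `s > 0` are integrable.
-/

section

open Filter ProbabilityTheory Set
open scoped Topology

variable {Ω : Type*} [MeasurableSpace Ω] {μ : Measure Ω}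

theorem hasDerivWithinAt_Ioi_integral_of_convexOn {f : ℝ → Ω → ℝ} {f' : Ω → ℝ} {a b : ℝ}
    (hab : a < b) (hf : ∀ t ∈ Icc a b, Integrable (f t) μ) (hf' : Integrable f' μ)
    (hconv : ∀ᵐ ω ∂μ, ConvexOn ℝ (Icc a b) (f · ω))
    (hderiv : ∀ᵐ ω ∂μ, HasDerivWithinAt (f · ω) (f' ω) (Ioi a) a) :
    HasDerivWithinAt (fun t ↦ ∫ ω, f t ω ∂μ) (∫ ω, f' ω ∂μ) (Ioi a) a := by
  have ha : a ∈ Icc a b := left_mem_Icc.2 hab.le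
  have hb : b ∈ Icc a b := right_mem_Icc.2 hab.le
  have slope_integrable {t : ℝ} (ht : t ∈ Icc a b) : Integrable (fun ω ↦ slope (f · ω) a t) μ :=
    ((hf t ht).sub (hf a ha)).smul (t - a)⁻¹
  have slope_integral {t : ℝ} (ht : t ∈ Icc a b) :
      ∫ ω, slope (f · ω) a t ∂μ = slope (fun t ↦ ∫ ω, f t ω ∂μ) a t := by
    simp only [slope_def_module, integral_smul, integral_sub (hf t ht) (hf a ha)]
  have eventually_mem : ∀ᶠ t in 𝓝[>] a, t ∈ Ioc a b := Ioc_mem_nhdsGT hab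
  rw [hasDerivWithinAt_iff_tendsto_slope' self_notMem_Ioi]
  suffices Tendsto (fun t ↦ ∫ ω, slope (f · ω) a t ∂μ) (𝓝[>] a) (𝓝 (∫ ω, f' ω ∂μ)) from
    this.congr' (eventually_mem.mono fun t ht ↦ slope_integral (Ioc_subset_Icc_self ht))
  refine tendsto_integral_filter_of_dominated_convergence
    (fun ω ↦ |f' ω| + |slope (f · ω) a b|) ?_ ?_ (hf'.abs.add (slope_integrable hb).abs) ?_
  · exact eventually_mem.mono fun t ht ↦
      (slope_integrable (Ioc_subset_Icc_self ht)).aestronglyMeasurable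
  · filter_upwards [eventually_mem] with t ht
    filter_upwards [hconv, hderiv] with ω hω hω'
    have htI : t ∈ Icc a b := Ioc_subset_Icc_self ht
    have deriv_le_slope : f' ω ≤ slope (f · ω) a t :=
      hω.le_slope_of_hasDerivWithinAt_Ioi ha htI ht.1 hω'
    have slope_le_slope : slope (f · ω) a t ≤ slope (f · ω) a b :=
      hω.monotoneOn_slope_gt ha ⟨htI, ht.1⟩ ⟨hb, hab⟩ ht.2
    exact (abs_le_max_abs_abs deriv_le_slope slope_le_slope).trans
      (max_le_add_of_nonneg (abs_nonneg _) (abs_nonneg _))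
  · filter_upwards [hderiv] with ω hω
    exact (hasDerivWithinAt_iff_tendsto_slope' self_notMem_Ioi).1 hω

theorem hasDerivWithinAt_Ioi_mgf_zero [IsFiniteMeasure μ] {X : Ω → ℝ} {s : ℝ} (hs : 0 < s)
    (hX : Integrable X μ) (hexp : Integrable (fun ω ↦ Real.exp (s * X ω)) μ) :
    HasDerivWithinAt (mgf X μ) (∫ ω, X ω ∂μ) (Ioi 0) 0 := by
  refine hasDerivWithinAt_Ioi_integral_of_convexOn hs
    (fun t ht ↦ integrable_exp_mul_of_nonneg_of_le hexp ht.1 ht.2) hX (ae_of_all μ fun ω ↦ ?_)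
    (ae_of_all μ fun ω ↦ ?_)
  · exact (convexOn_exp.comp_linearMap (LinearMap.mulRight ℝ (X ω))).subset
      (subset_univ _) (convex_Icc 0 s)
  · simpa using ((hasDerivAt_id (0 : ℝ)).mul_const (X ω)).exp.hasDerivWithinAt

theorem tendsto_inv_mul_log_of_hasDerivWithinAt_Ioi {M : ℝ → ℝ} {m : ℝ} (hM : M 0 = 1)
    (hderiv : HasDerivWithinAt M m (Ioi 0) 0) :
    Tendsto (fun t ↦ t⁻¹ * Real.log (M t)) (𝓝[>] 0) (𝓝 m) := by
  have hlog : HasDerivWithinAt (fun t ↦ Real.log (M t)) m (Ioi 0) 0 := by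
    simpa only [hM, div_one] using hderiv.log (hM ▸ one_ne_zero)
  refine ((hasDerivWithinAt_iff_tendsto_slope' self_notMem_Ioi).1 hlog).congr fun t ↦ ?_
  rw [slope_def_module, hM, Real.log_one, sub_zero, sub_zero, smul_eq_mul]

theorem integral_add_mul_exp_eq_mgf_neg [IsProbabilityMeasure μ] {R : Ω → ℝ} {t : ℝ} (ε : ℝ)
    (hexp : Integrable (fun ω ↦ Real.exp (-(t * R ω))) μ) :
    ∫ ω, (ε + (1 - ε) * Real.exp (-(t * R ω))) ∂μ = ε + (1 - ε) * mgf (-R) μ t := by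
  rw [integral_add (integrable_const ε) (hexp.const_mul (1 - ε)), integral_const_mul]
  simp only [integral_const, probReal_univ, one_smul, mgf, Pi.neg_apply, mul_neg]

theorem eps_effective_capacity_limit_theta_zero_general [IsProbabilityMeasure μ]
    {n s : ℝ} (ε : ℝ) (hn : 0 < n) (hs : 0 < s) {R : Ω → ℝ} (hR : Integrable R μ)
    (hexp : Integrable (fun ω ↦ Real.exp (-(s * R ω))) μ) :
    Tendsto
      (fun θ : ℝ ↦ -(1 / (n * θ)) *
        Real.log (∫ ω, (ε + (1 - ε) * Real.exp (-(n * θ * R ω))) ∂μ))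
      (𝓝[>] 0) (𝓝 ((1 - ε) * ∫ ω, R ω ∂μ)) := by
  have hexp' : Integrable (fun ω ↦ Real.exp (s * (-R) ω)) μ := by
    simpa only [Pi.neg_apply, mul_neg] using hexp
  have hderiv : HasDerivWithinAt (fun t ↦ ε + (1 - ε) * mgf (-R) μ t)
      ((1 - ε) * ∫ ω, (-R) ω ∂μ) (Ioi 0) 0 :=
    ((hasDerivWithinAt_Ioi_mgf_zero hs hR.neg hexp').const_mul (1 - ε)).const_add ε
  have hlim := tendsto_inv_mul_log_of_hasDerivWithinAt_Ioi (by simp) hderiv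
  have hscale : Tendsto (n * ·) (𝓝[>] 0) (𝓝[>] 0) :=
    tendsto_iff_comap.2 (comap_mulLeft_nhdsGT_zero hn).ge
  have hlim_neg := (hlim.comp hscale).neg
  simp only [Pi.neg_apply, integral_neg, mul_neg, neg_neg] at hlim_neg
  refine hlim_neg.congr' ?_
  filter_upwards [hscale (Ioc_mem_nhdsGT hs)] with θ hθ
  have hint : Integrable (fun ω ↦ Real.exp (-(n * θ * R ω))) μ := by
    simpa only [Pi.neg_apply, mul_neg] using
      integrable_exp_mul_of_nonneg_of_le hexp' hθ.1.le hθ.2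
  rw [integral_add_mul_exp_eq_mgf_neg ε hint, one_div, neg_mul, Function.comp_apply]

end

/-- As the delay constraint is relaxed (`θ → 0⁺`), the ε-effective
capacity converges to the mean service rate discounted by the decoding
success probability: `EC(θ,ϑ) → (1 − e^{−nϑ}) ∫ R dμ`. -/
theorem eps_effective_capacity_limit_theta_zero
    {Ω : Type*} [MeasurableSpace Ω] (μ : Measure Ω) [IsProbabilityMeasure μ]
    (n ϑ : ℝ) (hn : 0 < n) (hϑ : 0 < ϑ)
    (R : Ω → ℝ) (hRmeas : Measurable R) (hRnonneg : ∀ ω, 0 ≤ R ω)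
    (hRint : Integrable R μ) :
    Filter.Tendsto
      (fun θ : ℝ => -(1 / (n * θ)) *
        Real.log (∫ ω, (Real.exp (-(n * ϑ)) +
          (1 - Real.exp (-(n * ϑ))) * Real.exp (-(n * θ * R ω))) ∂μ))
      (nhdsWithin 0 (Set.Ioi 0))
      (nhds ((1 - Real.exp (-(n * ϑ))) * ∫ ω, R ω ∂μ)) := by
  have hexp : Integrable (fun ω ↦ Real.exp (-(1 * R ω))) μ :=
    .of_bound (by fun_prop) 1 (ae_of_all μ fun ω ↦ by simpa using hRnonneg ω)
  exact eps_effective_capacity_limit_theta_zero_general _ hn one_pos hRint hexp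
end
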